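/- arXiv:2106.04652 — 2 statements merged into one kernel-verified Lean document; each statement's English description precedes it below -/
import Mathlib

section
/- Let u_o : ℝ → ℝ be bounded. For each N ∈ ℕ let λ_i^N (i ∈ ℤ) be real numbers, set ω_i^N = λ_i^N − λ_{i−1}^N and e_i^N = ω_i^N + u_o(λ_i^N) − u_o(λ_{i−1}^N). Fix x ∈ ℝ and w ∈ ℝ and assume: (i) limsup_{ε→0} limsup_{N→∞} max_{i : |i−Nx|<Nε} N·|ω_{i+1}^N − ω_i^N| < ∞; (ii) the window averages (1/(2Nε)) ∑_{i : |i−Nx|<Nε} e_i^N converge to w as N→∞ and then ε→0. Then, as N→∞ and then ε→0, both max_{i : |i−Nx|<Nε} |ω_i^N − (1/(2Nε)) ∑_{j : |j−Nx|<Nε} e_j^N| → 0 and max_{i : |i−Nx|<Nε} |ω_i^N − w| → 0. -/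
/-!
Fix `ε` and let `N` be large, so that `N·|ω (i+1) - ω i| ≤ K` throughout the window. Since the
window is an integer interval of diameter less than `2Nε`, any two values of `ω` in it differ by at
most `2εK` (`osc_bound`). The increments of `u_o` telescope in the sum of the `e i`, so that
`∑ e i` differs from `∑ ω i` by at most `2M`, where `M` bounds `|u_o|` (`sum_telescope`). The window
has `m` sites with `|m - 2Nε| ≤ 1`. With `A` the window average of `e`, the identity
`2Nε (ω i - A) = (2Nε - m) ω i + ∑ (ω i - ω j) - (telescoped boundary term)` then gives
`2Nε |ω i - A| ≤ |ω i| + 2mεK + 2M`. Writing `|ω i| ≤ |A| + |ω i - A|` and absorbing the last term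
on the left yields `|ω i - A| ≤ (|A| + 2M)/(Nε) + 6εK` (`window_bound`). The averages `A` stay
bounded because they converge to `w`, so the bound is small as `N → ∞` and then `ε → 0`;
the second claim follows from the first by the triangle inequality.
-/


open Filter
open scoped Classical

/-- The window of lattice sites around `x` at scale `(N, ε)`:
integers `i` with `|i - N·x| < N·ε`. -/
noncomputable def window (N : ℕ) (x ε : ℝ) : Finset ℤ :=
  (Finset.Icc (Int.ceil ((N : ℝ) * x - (N : ℝ) * ε))
      (Int.floor ((N : ℝ) * x + (N : ℝ) * ε))).filter
    (fun i => |(i : ℝ) - (N : ℝ) * x| < (N : ℝ) * ε)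

/-- Window average `(1/(2Nε)) ∑_{i : |i−Nx|<Nε} a i`. -/
noncomputable def winAvg (N : ℕ) (x ε : ℝ) (a : ℤ → ℝ) : ℝ :=
  (1 / (2 * (N : ℝ) * ε)) * ∑ i ∈ window N x ε, a i

/-- Maximum of a (nonnegative) function over a finite set of integers
(0 if the set is empty). -/
noncomputable def fmax (s : Finset ℤ) (f : ℤ → ℝ) : ℝ :=
  ((s.sup fun i => Real.toNNReal (f i) : NNReal) : ℝ)

/-- limsup over `N → ∞`, valued in `EReal` to avoid junk values. -/
noncomputable def elimsup (f : ℕ → ℝ) : EReal :=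
  Filter.limsup (fun N => ((f N : ℝ) : EReal)) Filter.atTop

/-- `Q(N,ε) → L` as `N → ∞` and then `ε → 0`. -/
def DTendsto (Q : ℕ → ℝ → ℝ) (L : ℝ) : Prop :=
  ∀ δ : ℝ, 0 < δ → ∃ ε₀ : ℝ, 0 < ε₀ ∧ ∀ ε : ℝ, 0 < ε → ε < ε₀ →
    elimsup (fun N => |Q N ε - L|) ≤ (δ : EReal)

/-- `limsup_{ε→0} limsup_{N→∞} Q(N,ε) < ∞`. -/
def DBddLimsup (Q : ℕ → ℝ → ℝ) : Prop :=
  ∃ ε₀ : ℝ, 0 < ε₀ ∧ ∃ C : ℝ, ∀ ε : ℝ, 0 < ε → ε < ε₀ →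
    elimsup (fun N => Q N ε) ≤ (C : EReal)

lemma fmax_le {s : Finset ℤ} {f : ℤ → ℝ} {c : ℝ} (hc : 0 ≤ c) (h : ∀ i ∈ s, f i ≤ c) :
    fmax s f ≤ c := by
  have : (s.sup fun i => Real.toNNReal (f i)) ≤ Real.toNNReal c :=
    Finset.sup_le fun i hi => Real.toNNReal_le_toNNReal (h i hi)
  calc fmax s f ≤ (Real.toNNReal c : ℝ) := NNReal.coe_le_coe.mpr this
    _ = c := Real.coe_toNNReal c hc

lemma fmax_nonneg (s : Finset ℤ) (f : ℤ → ℝ) : 0 ≤ fmax s f := NNReal.coe_nonneg _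

lemma le_fmax {s : Finset ℤ} {f : ℤ → ℝ} {i : ℤ} (hi : i ∈ s) : f i ≤ fmax s f := by
  have : Real.toNNReal (f i) ≤ s.sup fun i => Real.toNNReal (f i) :=
    Finset.le_sup (f := fun i => Real.toNNReal (f i)) hi
  exact (Real.le_coe_toNNReal _).trans (NNReal.coe_le_coe.mpr this)

lemma eventually_lt_of_elimsup_le {f : ℕ → ℝ} {c d : ℝ} (h : elimsup f ≤ (c : EReal))
    (hcd : c < d) : ∀ᶠ N in atTop, f N < d := by
  have h1 : elimsup f < (d : EReal) := lt_of_le_of_lt h (EReal.coe_lt_coe_iff.mpr hcd)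
  filter_upwards [Filter.eventually_lt_of_limsup_lt h1] with N hN
  exact EReal.coe_lt_coe_iff.mp hN

lemma elimsup_le_of_eventually_le {f : ℕ → ℝ} {c : ℝ} (h : ∀ᶠ N in atTop, f N ≤ c) :
    elimsup f ≤ (c : EReal) := by
  refine Filter.limsup_le_of_le (by isBoundedDefault) ?_
  filter_upwards [h] with N hN
  exact EReal.coe_le_coe_iff.mpr hN

lemma mem_window {N : ℕ} {x ε : ℝ} {i : ℤ} :
    i ∈ window N x ε ↔ |(i : ℝ) - (N : ℝ) * x| < (N : ℝ) * ε := by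
  simp only [window, Finset.mem_filter, Finset.mem_Icc, Int.ceil_le, Int.le_floor,
    and_iff_right_iff_imp, abs_lt]
  intro h
  constructor <;> linarith [h.1, h.2]

lemma window_eq_Icc (N : ℕ) (x ε : ℝ) :
    window N x ε = Finset.Icc (⌊(N : ℝ) * x - N * ε⌋ + 1) (⌈(N : ℝ) * x + N * ε⌉ - 1) := by
  ext i
  rw [mem_window, Finset.mem_Icc, Int.add_one_le_iff, Int.floor_lt, Int.le_sub_one_iff,
    Int.lt_ceil, abs_lt]
  constructor <;> rintro ⟨h1, h2⟩ <;> constructor <;> linarith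

lemma sum_telescope (f : ℤ → ℝ) {a b : ℤ} (hab : a ≤ b) :
    ∑ i ∈ Finset.Icc a b, (f i - f (i - 1)) = f b - f (a - 1) := by
  induction b, hab using Int.leInduction with
  | base => simp
  | succ n hn ih =>
    have : Finset.Icc a (n + 1) = insert (n + 1) (Finset.Icc a n) := by
      ext j; simp only [Finset.mem_Icc, Finset.mem_insert]; omega
    rw [this, Finset.sum_insert (by simp), ih]
    simp

/-- A function on an integer interval whose one-step increments are at most `k` is `k`-Lipschitz. -/
lemma lipschitz_of_step {g : ℤ → ℝ} {a b : ℤ} {k : ℝ}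
    (h : ∀ i ∈ Finset.Icc a b, |g (i + 1) - g i| ≤ k) {i j : ℤ} (hai : a ≤ i) (hij : i ≤ j)
    (hjb : j ≤ b) : |g j - g i| ≤ k * ((j : ℝ) - i) := by
  induction j, hij using Int.leInduction with
  | base => simp
  | succ n hn ih =>
    have h1 := h n (Finset.mem_Icc.mpr ⟨by omega, by omega⟩)
    have h2 := ih (by omega)
    have h3 := abs_sub_le (g (n + 1)) (g n) (g i)
    push_cast
    linarith

lemma osc_bound {g : ℤ → ℝ} {N : ℕ} {x ε K : ℝ} (hN : 0 < (N : ℝ))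
    (h : ∀ i ∈ window N x ε, (N : ℝ) * |g (i + 1) - g i| ≤ K) {i j : ℤ}
    (hi : i ∈ window N x ε) (hj : j ∈ window N x ε) : |g i - g j| ≤ 2 * ε * K := by
  wlog hij : j ≤ i generalizing i j with H
  · rw [abs_sub_comm]; exact H hj hi (by omega)
  have hK : 0 ≤ K := le_trans (by positivity) (h i hi)
  have hstep : ∀ i ∈ window N x ε, |g (i + 1) - g i| ≤ K / N := fun i hi => by
    rw [le_div_iff₀ hN, mul_comm]; exact h i hi
  have h1 := abs_lt.mp (mem_window.mp hi)
  have h2 := abs_lt.mp (mem_window.mp hj)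
  rw [window_eq_Icc] at hstep hi hj
  calc |g i - g j| ≤ K / N * ((i : ℝ) - j) :=
        lipschitz_of_step hstep (Finset.mem_Icc.mp hj).1 hij (Finset.mem_Icc.mp hi).2
    _ ≤ K / N * (2 * (N * ε)) := by gcongr; linarith
    _ = 2 * ε * K := by field_simp

lemma card_window {N : ℕ} {x ε : ℝ} (hne : (window N x ε).Nonempty) :
    |2 * (N : ℝ) * ε - (window N x ε).card| ≤ 1 := by
  rw [window_eq_Icc] at hne ⊢
  have hle := Finset.nonempty_Icc.mp hne
  have hc : ((Finset.Icc (⌊(N : ℝ) * x - N * ε⌋ + 1) (⌈(N : ℝ) * x + N * ε⌉ - 1)).card : ℝ)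
      = (⌈(N : ℝ) * x + N * ε⌉ : ℝ) - ⌊(N : ℝ) * x - N * ε⌋ - 1 := by
    have := Int.card_Icc_of_le (⌊(N : ℝ) * x - N * ε⌋ + 1) (⌈(N : ℝ) * x + N * ε⌉ - 1) (by omega)
    have h2 := congrArg (Int.cast : ℤ → ℝ) this
    push_cast at h2
    rw [h2]; ring
  rw [hc, abs_le]
  have h1 := Int.floor_le ((N : ℝ) * x - N * ε)
  have h2 := Int.lt_floor_add_one ((N : ℝ) * x - N * ε)
  have h3 := Int.le_ceil ((N : ℝ) * x + N * ε)
  have h4 := Int.ceil_lt_add_one ((N : ℝ) * x + N * ε)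
  constructor <;> linarith

/-- The quantitative estimate at fixed `N` and `ε`: on the window, `g` is close to the window
average of `g` plus the increments of a bounded function `v`. -/
lemma window_bound {g v a : ℤ → ℝ} {N : ℕ} {x ε K M B : ℝ} (hN : 0 < (N : ℝ)) (hε : 0 < ε)
    (hNε : 1 ≤ N * ε) (hv : ∀ i, |v i| ≤ M) (ha : ∀ i, a i = g i + (v i - v (i - 1)))
    (h : ∀ i ∈ window N x ε, (N : ℝ) * |g (i + 1) - g i| ≤ K)
    (hB : |winAvg N x ε a| ≤ B) {i : ℤ} (hi : i ∈ window N x ε) :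
    |g i - winAvg N x ε a| ≤ (B + 2 * M) / (N * ε) + 6 * ε * K := by
  have hK : 0 ≤ K := le_trans (by positivity) (h i hi)
  set A := winAvg N x ε a with hA
  set T := (N : ℝ) * ε with hT
  have hTpos : 0 < T := by linarith
  have hcard := card_window ⟨i, hi⟩
  set m : ℝ := ((window N x ε).card : ℝ) with hm
  have hsum : 2 * T * A = ∑ j ∈ window N x ε, a j := by
    rw [hA, winAvg, hT]; field_simp
  obtain ⟨D, hD, hDb⟩ : ∃ D : ℝ, ∑ j ∈ window N x ε, (v j - v (j - 1)) = D ∧ |D| ≤ 2 * M := by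
    refine ⟨_, rfl, ?_⟩
    have hi' := hi
    rw [window_eq_Icc] at hi' ⊢
    rw [sum_telescope _ (Finset.nonempty_Icc.mp ⟨i, hi'⟩)]
    refine (abs_sub _ _).trans ?_
    linarith [hv (⌈(N : ℝ) * x + N * ε⌉ - 1), hv (⌊(N : ℝ) * x - N * ε⌋ + 1 - 1)]
  have hosc : |∑ j ∈ window N x ε, (g i - g j)| ≤ m * (2 * ε * K) := by
    refine (Finset.abs_sum_le_sum_abs _ _).trans ?_
    refine (Finset.sum_le_card_nsmul _ _ _ fun j hj => osc_bound hN h hi hj).trans ?_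
    rw [nsmul_eq_mul]
  have hid : 2 * T * (g i - A)
      = (2 * N * ε - m) * g i + ∑ j ∈ window N x ε, (g i - g j) - D := by
    have e1 : ∑ j ∈ window N x ε, (g i - g j) = m * g i - ∑ j ∈ window N x ε, g j := by
      rw [Finset.sum_sub_distrib, Finset.sum_const, nsmul_eq_mul]
    have e2 : ∑ j ∈ window N x ε, a j = ∑ j ∈ window N x ε, g j + D := by
      rw [← hD, ← Finset.sum_add_distrib]; exact Finset.sum_congr rfl fun j _ => ha j
    rw [mul_sub, hsum, e1, e2, hT]; ring
  have hmain : 2 * T * |g i - A| ≤ |g i| + m * (2 * ε * K) + 2 * M := by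
    rw [← abs_of_pos (show 0 < 2 * T by linarith), ← abs_mul, hid]
    refine (abs_sub _ _).trans (add_le_add ((abs_add_le _ _).trans (add_le_add ?_ hosc)) hDb)
    rw [abs_mul]
    exact mul_le_of_le_one_left (abs_nonneg _) hcard
  have hg : |g i| ≤ B + |g i - A| := by
    have := abs_add_le A (g i - A)
    rw [add_sub_cancel] at this
    linarith
  have hm3 : m ≤ 3 * T := by linarith [(abs_le.mp hcard).1]
  have hεK : 0 ≤ 2 * ε * K := by positivity
  have h4 : m * (2 * ε * K) ≤ 3 * T * (2 * ε * K) := mul_le_mul_of_nonneg_right hm3 hεK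
  -- `1 ≤ T` lets the `|g i - A|` coming from `|g i|` be absorbed into half of the left side.
  have h5 : |g i - A| ≤ T * |g i - A| := le_mul_of_one_le_left (abs_nonneg _) hNε
  have h6 : T * |g i - A| ≤ B + 2 * M + T * (6 * ε * K) := by linarith
  calc |g i - A| ≤ (B + 2 * M + T * (6 * ε * K)) / T := by
        rw [le_div_iff₀ hTpos]; linarith
    _ = (B + 2 * M) / T + 6 * ε * K := by field_simp

theorem stmt0
    (u_o : ℝ → ℝ) (hbd : ∃ M : ℝ, ∀ y, |u_o y| ≤ M)
    (lam ω e : ℕ → ℤ → ℝ)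
    (hω : ∀ N i, ω N i = lam N i - lam N (i - 1))
    (he : ∀ N i, e N i = ω N i + u_o (lam N i) - u_o (lam N (i - 1)))
    (x w : ℝ)
    (hi : DBddLimsup (fun N ε =>
      fmax (window N x ε) (fun i => (N : ℝ) * |ω N (i + 1) - ω N i|)))
    (hii : DTendsto (fun N ε => winAvg N x ε (e N)) w) :
    DTendsto (fun N ε =>
        fmax (window N x ε) (fun i => |ω N i - winAvg N x ε (e N)|)) 0 ∧
    DTendsto (fun N ε =>
        fmax (window N x ε) (fun i => |ω N i - w|)) 0 := by
  obtain ⟨M, hM⟩ := hbd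
  obtain ⟨ε₁, hε₁, C, hC⟩ := hi
  have hpt : ∀ δ : ℝ, 0 < δ → ∃ ε₀ : ℝ, 0 < ε₀ ∧ ∀ ε : ℝ, 0 < ε → ε < ε₀ →
      ∀ᶠ N : ℕ in atTop, ∀ i ∈ window N x ε, |ω N i - winAvg N x ε (e N)| ≤ δ := by
    intro δ hδ
    obtain ⟨ε₂, hε₂, hw⟩ := hii 1 one_pos
    set K : ℝ := |C| + 1 with hK
    have hKpos : 0 < K := by positivity
    refine ⟨min (min ε₁ ε₂) (δ / (12 * K)), by positivity, fun ε hε hlt => ?_⟩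
    rw [lt_min_iff, lt_min_iff, lt_div_iff₀ (by positivity)] at hlt
    obtain ⟨⟨hlt1, hlt2⟩, hlt3⟩ := hlt
    have hNε : Tendsto (fun N : ℕ => (N : ℝ) * ε) atTop atTop :=
      tendsto_natCast_atTop_atTop.atTop_mul_const hε
    have hdiv : Tendsto (fun N : ℕ => (|w| + 2 + 2 * M) / ((N : ℝ) * ε)) atTop (nhds 0) :=
      tendsto_const_nhds.div_atTop hNε
    filter_upwards [eventually_lt_of_elimsup_le (hC ε hε hlt1)
        (show C < K by linarith [le_abs_self C]),
      eventually_lt_of_elimsup_le (hw ε hε hlt2) (show (1 : ℝ) < 2 by norm_num),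
      hNε.eventually_ge_atTop 1, hdiv.eventually_lt_const (half_pos hδ),
      eventually_gt_atTop 0] with N h1 h2 h3 h4 h5 i hi
    have hB : |winAvg N x ε (e N)| ≤ |w| + 2 := by
      have := abs_add_le (winAvg N x ε (e N) - w) w
      rw [sub_add_cancel] at this
      linarith
    have := window_bound (g := ω N) (v := fun i => u_o (lam N i)) (M := M)
      (Nat.cast_pos.mpr h5) hε h3 (fun i => hM _) (fun i => by rw [he]; ring)
      (fun i hi => (le_fmax (f := fun i => (N : ℝ) * |ω N (i + 1) - ω N i|) hi).trans h1.le)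
      hB hi
    linarith
  constructor
  · intro δ hδ
    obtain ⟨ε₀, hε₀, h⟩ := hpt δ hδ
    refine ⟨ε₀, hε₀, fun ε hε hlt => elimsup_le_of_eventually_le ?_⟩
    filter_upwards [h ε hε hlt] with N hN
    rw [sub_zero, abs_of_nonneg (fmax_nonneg _ _)]
    exact fmax_le hδ.le hN
  · intro δ hδ
    obtain ⟨ε₀, hε₀, h⟩ := hpt (δ / 2) (half_pos hδ)
    obtain ⟨ε₂, hε₂, hw⟩ := hii (δ / 4) (by positivity)
    refine ⟨min ε₀ ε₂, lt_min hε₀ hε₂, fun ε hε hlt => elimsup_le_of_eventually_le ?_⟩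
    filter_upwards [h ε hε (hlt.trans_le (min_le_left _ _)),
      eventually_lt_of_elimsup_le (hw ε hε (hlt.trans_le (min_le_right _ _)))
        (show δ / 4 < δ / 2 by linarith)] with N hN hN2
    rw [sub_zero, abs_of_nonneg (fmax_nonneg _ _)]
    refine fmax_le hδ.le fun i hi => ?_
    have := abs_sub_le (ω N i) (winAvg N x ε (e N)) w
    linarith [hN i hi]
end

section
/- Fix K > 0. For every R > 0 there exists a constant C(R) > 0 such that for all w, w′ ∈ ℝ with |w| ≤ R and |w′| ≤ R, for every λ ∈ ℝ, and for every n ∈ ℤ, |μ_K[w, λ](n) − μ_K[w′, λ](n)| ≤ C(R) · |w − w′| · exp(−K n²/3). -/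
/-!
Write `u = m - λ`. A Gaussian weight centred at `λ - w` with `|w| ≤ R` is, up to a constant
depending on `K` and `R`, at most `exp (-(3K/4) u²)`, and so is its Lipschitz constant in `w`
(`gauss_diff_le`): the loss from `K` to `3K/4` absorbs the shift by `w` and the linear factor
produced by differentiating. The normalization `Z_K` is bounded above and below uniformly in its
centre (`tsum_gauss_le`, `le_Zfun`), so `rho K (λ - w) m` is Lipschitz in `w` with the same
Gaussian profile (`rho_diff_le`). Convolving with `rho K λ`, the identity
`u²/2 + (u + n)² - n²/3 = (3/2) (u + 2n/3)²` gives
`exp (-(3K/4) u²) exp (-K (u + n)²) ≤ exp (-K n²/3) exp (-(K/4) u²)`, whose sum over `m` is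
bounded uniformly in `λ`.
-/

/-- Normalization constant `Z_K(λ) = ∑_{m∈ℤ} exp(−K(m−λ)²)`. -/
noncomputable def Zfun (K lam : ℝ) : ℝ :=
  ∑' m : ℤ, Real.exp (-K * ((m : ℝ) - lam) ^ 2)

/-- Discrete Gaussian pmf `ρ_K[λ](n) = exp(−K(n−λ)²)/Z_K(λ)`. -/
noncomputable def rho (K lam : ℝ) (n : ℤ) : ℝ :=
  Real.exp (-K * ((n : ℝ) - lam) ^ 2) / Zfun K lam

/-- `μ_K[ω,λ](n) = ∑_{m∈ℤ} ρ_K[λ−ω](m) ρ_K[λ](m+n)`. -/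
noncomputable def muK (K ω lam : ℝ) (n : ℤ) : ℝ :=
  ∑' m : ℤ, rho K (lam - ω) m * rho K lam (m + n)

lemma summable_exp_sq {c : ℝ} (hc : 0 < c) : Summable fun m : ℤ => Real.exp (-c * (m : ℝ) ^ 2) := by
  have hN : Summable fun m : ℕ => Real.exp (-c * (m : ℝ) ^ 2) := by
    refine Summable.of_nonneg_of_le (fun _ => (Real.exp_pos _).le) (fun m => ?_)
      (Real.summable_exp_nat_mul_iff.mpr (neg_lt_zero.mpr hc))
    apply Real.exp_le_exp.mpr
    have : (m : ℝ) ≤ (m : ℝ) ^ 2 := by exact_mod_cast Nat.le_self_pow two_ne_zero m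
    nlinarith
  exact Summable.of_nat_of_neg (by simpa using hN) (by simpa using hN)

lemma gauss_floor_le {c : ℝ} (hc : 0 < c) (lam : ℝ) (m : ℤ) :
    Real.exp (-c * (((m + ⌊lam⌋ : ℤ) : ℝ) - lam) ^ 2)
      ≤ Real.exp c * Real.exp (-(c / 2) * (m : ℝ) ^ 2) := by
  rw [← Real.exp_add]
  apply Real.exp_le_exp.mpr
  have h1 := Int.floor_le lam
  have h2 := Int.lt_floor_add_one lam
  push_cast
  -- `(m - t)² ≥ m²/2 - t²`, applied with the fractional part `t = λ - ⌊λ⌋ ∈ [0, 1)`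
  have h3 : (lam - ⌊lam⌋) ^ 2 ≤ 1 := by nlinarith
  have h4 : (m : ℝ) ^ 2 / 2 - 1 ≤ ((m : ℝ) + ⌊lam⌋ - lam) ^ 2 := by
    nlinarith [sq_nonneg ((m : ℝ) - 2 * (lam - ⌊lam⌋))]
  nlinarith

lemma summable_gauss {c : ℝ} (hc : 0 < c) (lam : ℝ) :
    Summable fun m : ℤ => Real.exp (-c * ((m : ℝ) - lam) ^ 2) := by
  rw [← (Equiv.addRight ⌊lam⌋).summable_iff]
  exact Summable.of_nonneg_of_le (fun _ => (Real.exp_pos _).le) (gauss_floor_le hc lam)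
    ((summable_exp_sq (half_pos hc)).mul_left _)

/-- The bound does not depend on the centre: translating by `⌊λ⌋` moves it into `[0, 1)`. -/
lemma tsum_gauss_le {c : ℝ} (hc : 0 < c) :
    ∃ S : ℝ, 0 < S ∧ ∀ lam : ℝ, ∑' m : ℤ, Real.exp (-c * ((m : ℝ) - lam) ^ 2) ≤ S := by
  have hs := (summable_exp_sq (half_pos hc)).mul_left (Real.exp c)
  refine ⟨∑' m : ℤ, Real.exp c * Real.exp (-(c / 2) * (m : ℝ) ^ 2),
    hs.tsum_pos (fun _ => by positivity) 0 (by positivity), fun lam => ?_⟩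
  rw [← (Equiv.addRight ⌊lam⌋).tsum_eq]
  exact Summable.tsum_le_tsum (gauss_floor_le hc lam)
    ((Equiv.addRight ⌊lam⌋).summable_iff.mpr (summable_gauss hc lam)) hs

/-- The single term at `⌊λ⌋` already gives the bound. -/
lemma le_Zfun {K : ℝ} (hK : 0 < K) (lam : ℝ) : Real.exp (-K) ≤ Zfun K lam := by
  refine le_trans ?_ ((summable_gauss hK lam).le_tsum ⌊lam⌋ (fun _ _ => (Real.exp_pos _).le))
  apply Real.exp_le_exp.mpr
  have h1 := Int.floor_le lam
  have h2 := Int.lt_floor_add_one lam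
  have h3 : ((⌊lam⌋ : ℝ) - lam) ^ 2 ≤ 1 := by nlinarith
  nlinarith

lemma abs_exp_sub_exp_le (x y : ℝ) :
    |Real.exp x - Real.exp y| ≤ |x - y| * (Real.exp x + Real.exp y) := by
  have key : ∀ a b : ℝ, Real.exp a - Real.exp b ≤ |a - b| * (Real.exp a + Real.exp b) := by
    intro a b
    have h1 : Real.exp b = Real.exp a * Real.exp (b - a) := by rw [← Real.exp_add]; ring_nf
    have h2 := mul_le_mul_of_nonneg_left (Real.add_one_le_exp (b - a)) (Real.exp_pos a).le
    have h3 := mul_le_mul_of_nonneg_right (le_abs_self (a - b)) (Real.exp_pos a).le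
    have h4 := mul_nonneg (abs_nonneg (a - b)) (Real.exp_pos b).le
    nlinarith
  refine abs_sub_le_iff.mpr ⟨key x y, ?_⟩
  have := key y x
  rwa [abs_sub_comm, add_comm] at this

/-- A Gaussian with a shifted centre is dominated by a wider centred one, because
`(u + w)² ≥ (7/8) u² - 7 w²`. -/
lemma gauss_shift_le {K R : ℝ} (hK : 0 < K) {w : ℝ} (hw : |w| ≤ R) (u : ℝ) :
    Real.exp (-K * (u + w) ^ 2)
      ≤ Real.exp (7 * K * R ^ 2) * Real.exp (-(7 * K / 8) * u ^ 2) := by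
  rw [← Real.exp_add]
  apply Real.exp_le_exp.mpr
  have h1 : w ^ 2 ≤ R ^ 2 := sq_le_sq' (abs_le.mp hw).1 (abs_le.mp hw).2
  have h2 : 7 / 8 * u ^ 2 - 7 * R ^ 2 ≤ (u + w) ^ 2 := by
    nlinarith [sq_nonneg (u + 8 * w)]
  nlinarith

lemma gauss_diff_le {K R : ℝ} (hK : 0 < K) (hR : 0 < R) :
    ∃ C : ℝ, 0 < C ∧ ∀ w w' : ℝ, |w| ≤ R → |w'| ≤ R → ∀ u : ℝ,
      |Real.exp (-K * (u + w) ^ 2) - Real.exp (-K * (u + w') ^ 2)|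
        ≤ C * |w - w'| * Real.exp (-(3 * K / 4) * u ^ 2) := by
  refine ⟨2 * K * (8 / K + 1 + R) * (2 * Real.exp (7 * K * R ^ 2)), by positivity, ?_⟩
  intro w w' hw hw' u
  have h1 : |-K * (u + w) ^ 2 - -K * (u + w') ^ 2| ≤ K * |w - w'| * (2 * (|u| + R)) := by
    have : -K * (u + w) ^ 2 - -K * (u + w') ^ 2 = -(K * (w - w') * (2 * u + w + w')) := by ring
    rw [this, abs_neg, abs_mul, abs_mul, abs_of_pos hK]
    gcongr
    calc |2 * u + w + w'| ≤ |2 * u| + |w| + |w'| := abs_add_three _ _ _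
      _ ≤ 2 * (|u| + R) := by rw [abs_mul, abs_two]; linarith
  -- the linear factor costs the exponential rate `K/8`, through `x ≤ exp x` at `x = K u² / 8`
  have h2 : |u| + R ≤ (8 / K + 1 + R) * Real.exp (K / 8 * u ^ 2) := by
    have e1 : K / 8 * u ^ 2 ≤ Real.exp (K / 8 * u ^ 2) := by
      linarith [Real.add_one_le_exp (K / 8 * u ^ 2)]
    have e2 : 1 ≤ Real.exp (K / 8 * u ^ 2) := Real.one_le_exp (by positivity)
    have e3 : u ^ 2 ≤ 8 / K * Real.exp (K / 8 * u ^ 2) := by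
      calc u ^ 2 = 8 / K * (K / 8 * u ^ 2) := by field_simp
        _ ≤ _ := by gcongr
    have e4 : |u| ≤ u ^ 2 + 1 := by
      rw [← sq_abs]; nlinarith [sq_nonneg (|u| - 1), abs_nonneg u]
    nlinarith
  have h3 := gauss_shift_le hK hw u
  have h4 := gauss_shift_le hK hw' u
  have h5 : Real.exp (K / 8 * u ^ 2) * Real.exp (-(7 * K / 8) * u ^ 2)
      = Real.exp (-(3 * K / 4) * u ^ 2) := by
    rw [← Real.exp_add]; ring_nf
  calc _ ≤ _ := abs_exp_sub_exp_le _ _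
    _ ≤ (K * |w - w'| * (2 * ((8 / K + 1 + R) * Real.exp (K / 8 * u ^ 2)))) *
        (Real.exp (7 * K * R ^ 2) * Real.exp (-(7 * K / 8) * u ^ 2) +
          Real.exp (7 * K * R ^ 2) * Real.exp (-(7 * K / 8) * u ^ 2)) := by
        refine mul_le_mul (h1.trans ?_) (add_le_add h3 h4) (by positivity) (by positivity)
        gcongr
    _ = _ := by rw [← h5]; ring

lemma rho_diff_le {K R : ℝ} (hK : 0 < K) (hR : 0 < R) :
    ∃ C : ℝ, 0 < C ∧ ∀ w w' : ℝ, |w| ≤ R → |w'| ≤ R → ∀ (lam : ℝ) (m : ℤ),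
      |rho K (lam - w) m - rho K (lam - w') m|
        ≤ C * |w - w'| * Real.exp (-(3 * K / 4) * ((m : ℝ) - lam) ^ 2) := by
  obtain ⟨C, hC, hdiff⟩ := gauss_diff_le hK hR
  obtain ⟨S, hS, hsum⟩ := tsum_gauss_le (c := 3 * K / 4) (by positivity)
  refine ⟨C * Real.exp K + Real.exp (7 * K * R ^ 2) * (C * S) * (Real.exp K * Real.exp K),
    by positivity, ?_⟩
  intro w w' hw hw' lam m
  have hd : ∀ j : ℤ, |Real.exp (-K * ((j : ℝ) - (lam - w)) ^ 2)
      - Real.exp (-K * ((j : ℝ) - (lam - w')) ^ 2)|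
        ≤ C * |w - w'| * Real.exp (-(3 * K / 4) * ((j : ℝ) - lam) ^ 2) := by
    intro j
    have := hdiff w w' hw hw' ((j : ℝ) - lam)
    rwa [show (j : ℝ) - lam + w = j - (lam - w) by ring,
      show (j : ℝ) - lam + w' = j - (lam - w') by ring] at this
  have hsg := summable_gauss (c := 3 * K / 4) (by positivity) lam
  have hZ : |Zfun K (lam - w) - Zfun K (lam - w')| ≤ C * |w - w'| * S := by
    unfold Zfun
    rw [← (summable_gauss hK _).tsum_sub (summable_gauss hK _), ← Real.norm_eq_abs]
    refine (tsum_of_norm_bounded (hsg.mul_left (C * |w - w'|)).hasSum hd).trans ?_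
    rw [tsum_mul_left]
    have := hsum lam
    gcongr
  have hinv : ∀ a : ℝ, (Zfun K a)⁻¹ ≤ Real.exp K := by
    intro a
    rw [← neg_neg K, Real.exp_neg (-K), neg_neg]
    exact inv_anti₀ (Real.exp_pos _) (le_Zfun hK a)
  have hpos : ∀ a : ℝ, 0 < Zfun K a := fun a => (Real.exp_pos _).trans_le (le_Zfun hK a)
  have hE : Real.exp (-K * ((m : ℝ) - (lam - w')) ^ 2)
      ≤ Real.exp (7 * K * R ^ 2) * Real.exp (-(3 * K / 4) * ((m : ℝ) - lam) ^ 2) := by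
    have := gauss_shift_le hK hw' ((m : ℝ) - lam)
    rw [show (m : ℝ) - lam + w' = m - (lam - w') by ring] at this
    refine this.trans (mul_le_mul_of_nonneg_left (Real.exp_le_exp.mpr ?_) (Real.exp_pos _).le)
    nlinarith [mul_nonneg hK.le (sq_nonneg ((m : ℝ) - lam))]
  have h1 := hpos (lam - w)
  have h2 := hpos (lam - w')
  have hi1 := hinv (lam - w)
  have hi2 := hinv (lam - w')
  have hm := hd m
  unfold rho
  set A := Real.exp (-K * ((m : ℝ) - (lam - w)) ^ 2)
  set B := Real.exp (-K * ((m : ℝ) - (lam - w')) ^ 2)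
  set G := Real.exp (-(3 * K / 4) * ((m : ℝ) - lam) ^ 2)
  set Z := Zfun K (lam - w)
  set Z' := Zfun K (lam - w')
  have hB : 0 < B := Real.exp_pos _
  have hG : 0 < G := Real.exp_pos _
  have split : A / Z - B / Z' = (A - B) * Z⁻¹ - B * (Z - Z') * (Z⁻¹ * Z'⁻¹) := by
    field_simp
    ring
  calc |A / Z - B / Z'|
      ≤ |A - B| * Z⁻¹ + B * |Z - Z'| * (Z⁻¹ * Z'⁻¹) := by
        rw [split]
        refine (abs_sub _ _).trans (le_of_eq ?_)
        simp only [abs_mul, abs_inv, abs_of_pos h1, abs_of_pos h2, abs_of_pos hB]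
    _ ≤ (C * |w - w'| * G) * Real.exp K
        + (Real.exp (7 * K * R ^ 2) * G) * (C * |w - w'| * S) * (Real.exp K * Real.exp K) := by
        gcongr
    _ = _ := by ring

lemma rho_le {K : ℝ} (hK : 0 < K) (lam : ℝ) (n : ℤ) :
    rho K lam n ≤ Real.exp K * Real.exp (-K * ((n : ℝ) - lam) ^ 2) := by
  unfold rho
  have h := le_Zfun hK lam
  rw [div_le_iff₀ ((Real.exp_pos _).trans_le h)]
  have h1 : 1 ≤ Real.exp K * Zfun K lam := by
    calc 1 = Real.exp K * Real.exp (-K) := by rw [← Real.exp_add]; simp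
      _ ≤ _ := by gcongr
  nlinarith [Real.exp_pos (-K * ((n : ℝ) - lam) ^ 2)]

lemma rho_nonneg {K : ℝ} (hK : 0 < K) (lam : ℝ) (n : ℤ) : 0 ≤ rho K lam n :=
  div_nonneg (Real.exp_pos _).le ((Real.exp_pos _).trans_le (le_Zfun hK lam)).le

lemma summable_mu {K : ℝ} (hK : 0 < K) (a lam : ℝ) (n : ℤ) :
    Summable fun m : ℤ => rho K a m * rho K lam (m + n) := by
  refine Summable.of_nonneg_of_le
    (fun m => mul_nonneg (rho_nonneg hK _ _) (rho_nonneg hK _ _)) (fun m => ?_)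
    (((summable_gauss hK a).mul_left (Real.exp K)).mul_right (Real.exp K))
  refine mul_le_mul (rho_le hK a m) ((rho_le hK lam (m + n)).trans ?_) (rho_nonneg hK _ _)
    (by positivity)
  refine mul_le_of_le_one_right (Real.exp_pos _).le (Real.exp_le_one_iff.mpr ?_)
  nlinarith [sq_nonneg (((m + n : ℤ) : ℝ) - lam)]

theorem stmt5 (K : ℝ) (hK : 0 < K) :
    ∀ R : ℝ, 0 < R → ∃ C : ℝ, 0 < C ∧
      ∀ w w' : ℝ, |w| ≤ R → |w'| ≤ R → ∀ lam : ℝ, ∀ n : ℤ,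
        |muK K w lam n - muK K w' lam n| ≤
          C * |w - w'| * Real.exp (-K * (n : ℝ) ^ 2 / 3) := by
  intro R hR
  obtain ⟨C, hC, hdiff⟩ := rho_diff_le hK hR
  obtain ⟨S, hS, hsum⟩ := tsum_gauss_le (c := K / 4) (by positivity)
  refine ⟨C * Real.exp K * S, by positivity, ?_⟩
  intro w w' hw hw' lam n
  have hsg := summable_gauss (c := K / 4) (by positivity) lam
  unfold muK
  rw [← (summable_mu hK _ lam n).tsum_sub (summable_mu hK _ lam n), ← Real.norm_eq_abs]
  refine (tsum_of_norm_bounded (hsg.mul_left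
    (C * |w - w'| * Real.exp K * Real.exp (-K * (n : ℝ) ^ 2 / 3))).hasSum fun m => ?_).trans ?_
  · rw [← sub_mul, Real.norm_eq_abs, abs_mul, abs_of_nonneg (rho_nonneg hK lam (m + n))]
    have hexp : Real.exp (-(3 * K / 4) * ((m : ℝ) - lam) ^ 2)
        * Real.exp (-K * (((m + n : ℤ) : ℝ) - lam) ^ 2)
        ≤ Real.exp (-K * (n : ℝ) ^ 2 / 3) * Real.exp (-(K / 4) * ((m : ℝ) - lam) ^ 2) := by
      rw [← Real.exp_add, ← Real.exp_add]
      apply Real.exp_le_exp.mpr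
      push_cast
      -- completing the square: `u²/2 + (u + n)² - n²/3 = (3/2) (u + 2n/3)²` with `u = m - λ`
      have := mul_nonneg hK.le (sq_nonneg ((m : ℝ) - lam + 2 / 3 * n))
      nlinarith
    calc _ ≤ (C * |w - w'| * Real.exp (-(3 * K / 4) * ((m : ℝ) - lam) ^ 2))
          * (Real.exp K * Real.exp (-K * (((m + n : ℤ) : ℝ) - lam) ^ 2)) :=
          mul_le_mul (hdiff w w' hw hw' lam m) (rho_le hK lam (m + n)) (rho_nonneg hK _ _)
            (by positivity)
      _ = C * |w - w'| * Real.exp K * (Real.exp (-(3 * K / 4) * ((m : ℝ) - lam) ^ 2)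
          * Real.exp (-K * (((m + n : ℤ) : ℝ) - lam) ^ 2)) := by ring
      _ ≤ C * |w - w'| * Real.exp K * (Real.exp (-K * (n : ℝ) ^ 2 / 3)
          * Real.exp (-(K / 4) * ((m : ℝ) - lam) ^ 2)) := by gcongr
      _ = _ := by ring
  · rw [tsum_mul_left]
    calc _ ≤ C * |w - w'| * Real.exp K * Real.exp (-K * (n : ℝ) ^ 2 / 3) * S := by
          have := hsum lam
          gcongr
      _ = _ := by ring
end
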